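/- arXiv:1206.6517 — 2 statements merged into one kernel-verified Lean document; each statement's English description precedes it below -/
import Mathlib

section
/- Let W be the group of ℤ-linear automorphisms g of V = (Fin 7 → ℤ) satisfying ⟨g x, g y⟩ = ⟨x, y⟩ for all x, y ∈ V and g K = K, acting on the ℚ-vector space 𝒱 of functions from the set of lines to ℚ by (g ⬝ v)(L) = v(g⁻¹ L). Let T ⊆ 𝒱 be the ℚ-span of the indicator functions of the 45 triangles. Then T is W-invariant, and the quotient representation 𝒱/T is 6-dimensional and irreducible, i.e. the only W-invariant subspaces of 𝒱/T are 0 and 𝒱/T itself. -/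
/-- The symmetric bilinear form of signature (1,6) on the lattice `Fin 7 → ℤ`,
modelling the Picard lattice of a smooth cubic surface. -/
def B (x y : Fin 7 → ℤ) : ℤ :=
  x 0 * y 0 - x 1 * y 1 - x 2 * y 2 - x 3 * y 3 - x 4 * y 4 - x 5 * y 5 - x 6 * y 6

/-- The canonical class `K = (-3,1,1,1,1,1,1)`. -/
def K : Fin 7 → ℤ := ![-3, 1, 1, 1, 1, 1, 1]

/-- A line is a vector `L` with `⟨L,L⟩ = -1` and `⟨L,K⟩ = -1`. -/
def IsLine (L : Fin 7 → ℤ) : Prop := B L L = -1 ∧ B L K = -1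

/-- A triangle is a 3-element set of (pairwise distinct) lines summing to `-K`. -/
def IsTriangle (T : Finset (Fin 7 → ℤ)) : Prop :=
  T.card = 3 ∧ (∀ L ∈ T, IsLine L) ∧ ∑ L ∈ T, L = -K

/-- The set of ℤ-linear automorphisms of the lattice preserving the form and fixing `K`:
the Weyl group of `E₆`. -/
def Wset : Set ((Fin 7 → ℤ) ≃ₗ[ℤ] (Fin 7 → ℤ)) :=
  {g | (∀ x y, B (g x) (g y) = B x y) ∧ g K = K}

/-- The ℚ-vector space of functions from the set of lines to ℚ. -/
abbrev Vq : Type := {L : Fin 7 → ℤ // IsLine L} → ℚ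

/-- The indicator function of a triangle: value 1 at each of its lines, 0 elsewhere. -/
def chi (T : Finset (Fin 7 → ℤ)) : Vq :=
  fun L => if (L : Fin 7 → ℤ) ∈ T then 1 else 0

/-- The span of the 45 indicator vectors of triangles. -/
def Vtet : Submodule ℚ Vq := Submodule.span ℚ (chi '' {T | IsTriangle T})

/-- A subspace `U` of the space of ℚ-valued functions on the 27 lines is `W`-invariant if
for every `g ∈ W` and every `v ∈ U`, the function `g ⬝ v : L ↦ v (g⁻¹ L)` (characterized by
`(g ⬝ v) (g L) = v L`) again belongs to `U`. -/
def IsWInvariant (U : Submodule ℚ Vq) : Prop :=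
  ∀ g ∈ Wset, ∀ v ∈ U, ∀ w : Vq,
    (∀ L M : {L : Fin 7 → ℤ // IsLine L},
      g (L : Fin 7 → ℤ) = (M : Fin 7 → ℤ) → w M = v L) → w ∈ U

/-! Sending a line to its class modulo `K` extends to a linear map from `𝒱` onto the 6-dimensional
space `(V / K) ⊗ ℚ`, which is `K^⊥ ⊗ ℚ`, and this map kills every triangle. Its kernel is no larger
than the span of the triangles: if a function `φ` on the lines has sum zero on every triangle and
vanishes on the exceptional curves `Eᵢ`, then the triangles `Eᵢ, Gⱼ, Fᵢⱼ` (conics `Gⱼ`, secants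
`Fᵢⱼ = Fⱼᵢ`) give `φ Fᵢⱼ = -φ Gⱼ = -φ Gᵢ`, so `φ` is constant on the conics, and a triangle of three
secants makes the constant zero.

On the quotient, each root of `K^⊥` acts by a reflection. The Cartan matrix of the simple roots is
invertible, so a nonzero invariant subspace contains a vector moved by some simple reflection, hence
that simple root; as the Dynkin diagram is connected, it contains the other simple roots too. -/

/-- The total transform of a general line of the plane, when the cubic surface is viewed as the
blowup of the plane in six points. -/
def hyperplaneClass : Fin 7 → ℤ := Pi.single 0 1

/-- The exceptional curve over the `i`-th point. -/
def exceptionalLine (i : Fin 6) : Fin 7 → ℤ := Pi.single i.succ 1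

/-- The strict transform of the line through the `i`-th and `j`-th points; it is one of the
27 lines when `i ≠ j`. -/
def secantLine (i j : Fin 6) : Fin 7 → ℤ :=
  hyperplaneClass - exceptionalLine i - exceptionalLine j

/-- The strict transform of the conic through all points but the `j`-th. -/
def conicLine (j : Fin 6) : Fin 7 → ℤ :=
  (2 : ℤ) • hyperplaneClass - ∑ i, exceptionalLine i + exceptionalLine j

instance decidablePredIsLine : DecidablePred IsLine := fun L =>
  inferInstanceAs (Decidable (B L L = -1 ∧ B L K = -1))

instance decidablePredIsTriangle : DecidablePred IsTriangle := fun T =>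
  inferInstanceAs (Decidable (T.card = 3 ∧ (∀ L ∈ T, IsLine L) ∧ ∑ L ∈ T, L = -K))

section Classification

theorem exists_finset_eq_indicator_of_sum_sq_eq_sum {ι : Type*} [Fintype ι] [DecidableEq ι]
    {x : ι → ℤ} (h : ∑ i, x i ^ 2 = ∑ i, x i) :
    ∃ S : Finset ι, (∀ i, x i = if i ∈ S then 1 else 0) ∧ (S.card : ℤ) = ∑ i, x i := by
  have hnonneg : ∀ i ∈ Finset.univ, 0 ≤ x i ^ 2 - x i := fun i _ =>
    sub_nonneg.2 (Int.le_self_sq (x i))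
  have hzero : ∀ i, x i ^ 2 - x i = 0 := fun i =>
    (Finset.sum_eq_zero_iff_of_nonneg hnonneg).1
      (by rw [Finset.sum_sub_distrib, h, sub_self]) i (Finset.mem_univ i)
  have hval : ∀ i, x i = if x i = 1 then 1 else 0 := fun i => by
    obtain h0 | h1 := mul_eq_zero.1 (by linear_combination hzero i : x i * (x i - 1) = 0)
    · simp [h0]
    · simp [sub_eq_zero.1 h1]
  refine ⟨Finset.univ.filter (x · = 1), by simpa using hval, ?_⟩
  rw [Finset.sum_congr rfl fun i _ => hval i, Finset.sum_boole]

theorem B_eq_mul_sub_sum (x y : Fin 7 → ℤ) :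
    B x y = x 0 * y 0 - ∑ i : Fin 6, x i.succ * y i.succ := by
  simp only [Fin.sum_univ_six]
  change B x y = x 0 * y 0 - (x 1 * y 1 + x 2 * y 2 + x 3 * y 3 + x 4 * y 4 + x 5 * y 5 + x 6 * y 6)
  rw [B]
  ring

theorem eq_smul_hyperplaneClass_add_sum (x : Fin 7 → ℤ) :
    x = x 0 • hyperplaneClass + ∑ i : Fin 6, x i.succ • exceptionalLine i := by
  conv_lhs => rw [pi_eq_sum_univ' x, Fin.sum_univ_succ]
  rfl

theorem IsLine.sum_succ {L : Fin 7 → ℤ} (hL : IsLine L) :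
    ∑ i : Fin 6, L i.succ = 1 - 3 * L 0 := by
  have h : B L K = L 0 * (-3) - ∑ i : Fin 6, L i.succ * 1 := by
    rw [B_eq_mul_sub_sum]
    congr 1
  simp only [mul_one] at h
  linarith [hL.2]

theorem IsLine.sum_succ_sq {L : Fin 7 → ℤ} (hL : IsLine L) :
    ∑ i : Fin 6, L i.succ ^ 2 = L 0 ^ 2 + 1 := by
  have h := hL.1
  rw [B_eq_mul_sub_sum] at h
  simp only [← pow_two] at h
  linarith

theorem IsLine.degree_eq {L : Fin 7 → ℤ} (hL : IsLine L) : L 0 = 0 ∨ L 0 = 1 ∨ L 0 = 2 := by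
  have cauchy_schwarz := sq_sum_le_card_mul_sum_sq (s := Finset.univ) (f := fun i => L (Fin.succ i))
  rw [hL.sum_succ, hL.sum_succ_sq, Finset.card_fin] at cauchy_schwarz
  push_cast at cauchy_schwarz
  have : 0 ≤ L 0 := by nlinarith
  have : L 0 ≤ 2 := by nlinarith
  lia

theorem IsLine.eq_exceptionalLine {L : Fin 7 → ℤ} (hL : IsLine L) (h : L 0 = 0) :
    ∃ i, L = exceptionalLine i := by
  obtain ⟨S, hS, hcard⟩ := exists_finset_eq_indicator_of_sum_sq_eq_sum
    (x := fun i => L (Fin.succ i)) (by simp [hL.sum_succ, hL.sum_succ_sq, h])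
  rw [hL.sum_succ, h] at hcard
  obtain ⟨i, rfl⟩ := Finset.card_eq_one.1 (by lia : S.card = 1)
  refine ⟨i, ?_⟩
  rw [eq_smul_hyperplaneClass_add_sum L]
  simp [h, hS]

theorem IsLine.exists_finset_of_pos {L : Fin 7 → ℤ} (hL : IsLine L) (h : 0 < L 0) :
    ∃ S : Finset (Fin 6),
      L = L 0 • hyperplaneClass - ∑ i ∈ S, exceptionalLine i ∧ (S.card : ℤ) = 3 * L 0 - 1 := by
  have hsq : L 0 ^ 2 + 1 = 3 * L 0 - 1 := by
    obtain h0 | h0 | h0 := hL.degree_eq <;> simp_all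
  obtain ⟨S, hS, hcard⟩ := exists_finset_eq_indicator_of_sum_sq_eq_sum
    (x := fun i => -L (Fin.succ i)) (by simp [hL.sum_succ, hL.sum_succ_sq, hsq])
  refine ⟨S, ?_, by simpa [hL.sum_succ] using hcard⟩
  conv_lhs => rw [eq_smul_hyperplaneClass_add_sum L]
  simp [neg_eq_iff_eq_neg.1 (hS _), sub_eq_add_neg]

theorem IsLine.eq_secantLine {L : Fin 7 → ℤ} (hL : IsLine L) (h : L 0 = 1) :
    ∃ i j, i ≠ j ∧ L = secantLine i j := by
  obtain ⟨S, hS, hcard⟩ := hL.exists_finset_of_pos (by lia)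
  obtain ⟨i, j, hij, rfl⟩ := Finset.card_eq_two.1 (by lia : S.card = 2)
  refine ⟨i, j, hij, ?_⟩
  rw [hS, h, Finset.sum_pair hij, secantLine, one_smul, sub_add_eq_sub_sub]

theorem IsLine.eq_conicLine {L : Fin 7 → ℤ} (hL : IsLine L) (h : L 0 = 2) :
    ∃ j, L = conicLine j := by
  obtain ⟨S, hS, hcard⟩ := hL.exists_finset_of_pos (by lia)
  obtain ⟨j, hj⟩ := Finset.card_eq_one.1
    (by rw [Finset.card_compl, Fintype.card_fin]; lia : Sᶜ.card = 1)
  refine ⟨j, ?_⟩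
  rw [hS, h, conicLine, ← Finset.sum_add_sum_compl S, hj, Finset.sum_singleton]
  abel

theorem IsLine.eq_exceptionalLine_or_secantLine_or_conicLine {L : Fin 7 → ℤ} (hL : IsLine L) :
    (∃ i, L = exceptionalLine i) ∨ (∃ i j, i ≠ j ∧ L = secantLine i j) ∨ ∃ j, L = conicLine j :=
  hL.degree_eq.imp hL.eq_exceptionalLine (Or.imp hL.eq_secantLine hL.eq_conicLine)

theorem isLine_exceptionalLine (i : Fin 6) : IsLine (exceptionalLine i) := by
  decide +revert

instance finite_isLine : Finite {L : Fin 7 → ℤ // IsLine L} := by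
  refine Set.Finite.subset ((Set.finite_range exceptionalLine).union
    ((Set.finite_range (Function.uncurry secantLine)).union (Set.finite_range conicLine))) ?_
  rintro L hL
  rcases IsLine.eq_exceptionalLine_or_secantLine_or_conicLine hL with
    ⟨i, rfl⟩ | ⟨i, j, -, rfl⟩ | ⟨j, rfl⟩
  exacts [.inl ⟨i, rfl⟩, .inr (.inl ⟨(i, j), rfl⟩), .inr (.inr ⟨j, rfl⟩)]

noncomputable instance fintypeIsLine : Fintype {L : Fin 7 → ℤ // IsLine L} := Fintype.ofFinite _

end Classification

section Triangles

theorem isTriangle_exceptionalLine_conicLine_secantLine {i j : Fin 6} (hij : i ≠ j) :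
    IsTriangle {exceptionalLine i, conicLine j, secantLine i j} := by
  decide +revert

theorem isTriangle_secantLine :
    IsTriangle {secantLine 0 1, secantLine 2 3, secantLine 4 5} := by
  decide

theorem secantLine_comm (i j : Fin 6) : secantLine i j = secantLine j i :=
  sub_right_comm _ _ _

theorem IsTriangle.sum_eq {A : Type*} [AddCommMonoid A] {a b c : Fin 7 → ℤ}
    (h : IsTriangle {a, b, c}) (φ : (Fin 7 → ℤ) → A) :
    ∑ L ∈ {a, b, c}, φ L = φ a + φ b + φ c := by
  obtain ⟨hab, hac, hbc⟩ : a ≠ b ∧ a ≠ c ∧ b ≠ c := by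
    have := h.1
    grind
  rw [Finset.sum_insert (by simp [hab, hac]), Finset.sum_pair hbc, add_assoc]

theorem eq_zero_of_sum_isTriangle_eq_zero {A : Type*} [AddCommGroup A] [IsAddTorsionFree A]
    {φ : (Fin 7 → ℤ) → A} (htri : ∀ T, IsTriangle T → ∑ L ∈ T, φ L = 0)
    (hexc : ∀ i, φ (exceptionalLine i) = 0) {L : Fin 7 → ℤ} (hL : IsLine L) : φ L = 0 := by
  have hsec : ∀ i j, i ≠ j → φ (secantLine i j) = -φ (conicLine j) := fun i j hij => by
    have hT := isTriangle_exceptionalLine_conicLine_secantLine hij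
    have := hT.sum_eq φ
    rw [htri _ hT, hexc, zero_add] at this
    exact eq_neg_of_add_eq_zero_right this.symm
  have hconst : ∀ j, φ (conicLine j) = φ (conicLine 0) := fun j => by
    obtain rfl | hj := eq_or_ne j 0
    · rfl
    · rw [← neg_inj, ← hsec 0 j hj.symm, ← hsec j 0 hj, secantLine_comm]
  have hconic : φ (conicLine 0) = 0 := by
    have := isTriangle_secantLine.sum_eq φ
    rw [htri _ isTriangle_secantLine, hsec _ _ (by decide), hsec _ _ (by decide),
      hsec _ _ (by decide), hconst 1, hconst 3, hconst 5] at this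
    refine (nsmul_eq_zero_iff_right (three_ne_zero' ℕ)).1 ?_
    rw [← neg_eq_zero, this]
    abel
  rcases hL.eq_exceptionalLine_or_secantLine_or_conicLine with
    ⟨i, rfl⟩ | ⟨i, j, hij, rfl⟩ | ⟨j, rfl⟩
  · exact hexc i
  · rw [hsec i j hij, hconst, hconic, neg_zero]
  · rw [hconst, hconic]

theorem chi_singleton (L : {L : Fin 7 → ℤ // IsLine L}) : chi {L.1} = Pi.single L 1 := by
  ext M
  simp [chi, Pi.single_apply, Subtype.ext_iff]

theorem chi_eq_sum_chi_singleton (T : Finset (Fin 7 → ℤ)) : chi T = ∑ L ∈ T, chi {L} := by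
  ext M
  simp [chi, Finset.sum_apply]

theorem eq_top_of_Vtet_le {U : Submodule ℚ Vq} (hU : Vtet ≤ U)
    (hexc : ∀ i, chi {exceptionalLine i} ∈ U) : U = ⊤ := by
  have : IsAddTorsionFree (Vq ⧸ U) := .of_module_rat _
  have hmem : ∀ L : {L : Fin 7 → ℤ // IsLine L}, chi {L.1} ∈ U := fun L => by
    rw [← Submodule.Quotient.mk_eq_zero]
    refine eq_zero_of_sum_isTriangle_eq_zero (φ := fun L => U.mkQ (chi {L})) (fun T hT => ?_)
      (fun i => (Submodule.Quotient.mk_eq_zero U).2 (hexc i)) L.2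
    rw [← map_sum, ← chi_eq_sum_chi_singleton]
    exact (Submodule.Quotient.mk_eq_zero U).2 (hU (Submodule.subset_span ⟨T, hT, rfl⟩))
  rw [← top_le_iff, ← (Pi.basisFun ℚ _).span_eq, Submodule.span_le]
  rintro _ ⟨L, rfl⟩
  rw [Pi.basisFun_apply, ← chi_singleton]
  exact hmem L

end Triangles

section Projection

/-- The quotient of the lattice by `K`, with rational coefficients, in the basis of the exceptional
curves. It is a model of `K^⊥ ⊗ ℚ` because `⟨K, K⟩ ≠ 0`; the hyperplane class `H` goes to
`(1/3, …, 1/3)` because `3H ≡ ∑ Eᵢ` modulo `K`. -/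
def projK : (Fin 7 → ℤ) →+ (Fin 6 → ℚ) :=
  AddMonoidHom.mk' (fun x i => x i.succ + x 0 / 3) fun x y => by
    ext i
    simp only [Pi.add_apply]
    push_cast
    ring

theorem projK_apply (x : Fin 7 → ℤ) (i : Fin 6) : projK x i = x i.succ + x 0 / 3 := rfl

theorem projK_K : projK K = 0 := by
  ext i
  fin_cases i <;> norm_num [projK_apply, K, Fin.succ]

theorem projK_exceptionalLine (i : Fin 6) : projK (exceptionalLine i) = Pi.single i 1 := by
  ext j
  simp [projK_apply, exceptionalLine, Pi.single_apply]

/-- The linear extension to `Vq` of the projection of lines along `K`. -/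
noncomputable def lineProj : Vq →ₗ[ℚ] (Fin 6 → ℚ) :=
  Fintype.linearCombination ℚ fun L => projK L.1

theorem lineProj_chi_singleton {L : Fin 7 → ℤ} (hL : IsLine L) : lineProj (chi {L}) = projK L := by
  rw [chi_singleton ⟨L, hL⟩, lineProj, Fintype.linearCombination_apply_single, one_smul]

theorem lineProj_chi {T : Finset (Fin 7 → ℤ)} (hT : ∀ L ∈ T, IsLine L) :
    lineProj (chi T) = projK (∑ L ∈ T, L) := by
  rw [chi_eq_sum_chi_singleton, map_sum, map_sum]
  exact Finset.sum_congr rfl fun L hL => lineProj_chi_singleton (hT L hL)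

theorem lineProj_sum_smul_chi_exceptionalLine (c : Fin 6 → ℚ) :
    lineProj (∑ i, c i • chi {exceptionalLine i}) = c := by
  simp_rw [map_sum, map_smul, lineProj_chi_singleton (isLine_exceptionalLine _),
    projK_exceptionalLine, ← pi_eq_sum_univ' c]

theorem lineProj_surjective : Function.Surjective lineProj := fun c =>
  ⟨_, lineProj_sum_smul_chi_exceptionalLine c⟩

theorem Vtet_le_ker_lineProj : Vtet ≤ LinearMap.ker lineProj := by
  refine Submodule.span_le.2 ?_
  rintro _ ⟨T, ⟨-, hlines, hsum⟩, rfl⟩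
  rw [SetLike.mem_coe, LinearMap.mem_ker, lineProj_chi hlines, hsum, map_neg, projK_K, neg_zero]

theorem ker_lineProj : LinearMap.ker lineProj = Vtet := by
  refine le_antisymm (fun v hv => ?_) Vtet_le_ker_lineProj
  have hsup : Vtet ⊔ Submodule.span ℚ (Set.range fun i => chi {exceptionalLine i}) = ⊤ :=
    eq_top_of_Vtet_le le_sup_left fun i =>
      Submodule.mem_sup_right (Submodule.subset_span ⟨i, rfl⟩)
  obtain ⟨t, ht, e, he, rfl⟩ := Submodule.mem_sup.1 (hsup ▸ Submodule.mem_top (x := v))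
  obtain ⟨c, rfl⟩ := (Submodule.mem_span_range_iff_exists_fun ℚ).1 he
  have hc : c = 0 := by
    rw [LinearMap.mem_ker, map_add, Vtet_le_ker_lineProj ht, zero_add,
      lineProj_sum_smul_chi_exceptionalLine] at hv
    exact hv
  simpa [hc] using ht

/-- The identification of the quotient by the triangle span with `K^⊥ ⊗ ℚ`, a line corresponding
to its projection along `K`. -/
noncomputable def quotientVtetEquiv : (Vq ⧸ Vtet) ≃ₗ[ℚ] (Fin 6 → ℚ) :=
  (Submodule.quotEquivOfEq _ _ ker_lineProj.symm).trans
    (lineProj.quotKerEquivOfSurjective lineProj_surjective)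

theorem quotientVtetEquiv_mkQ (v : Vq) : quotientVtetEquiv (Vtet.mkQ v) = lineProj v := rfl

end Projection

section WeylAction

variable {g : (Fin 7 → ℤ) ≃ₗ[ℤ] (Fin 7 → ℤ)}

theorem isLine_apply_iff (hg : g ∈ Wset) (L : Fin 7 → ℤ) : IsLine (g L) ↔ IsLine L := by
  have hK : B (g L) K = B L K := by rw [← hg.1 L K, hg.2]
  rw [IsLine, IsLine, hg.1, hK]

theorem IsTriangle.map {T : Finset (Fin 7 → ℤ)} (hT : IsTriangle T) (hg : g ∈ Wset) :
    IsTriangle (T.map g.toEquiv.toEmbedding) := by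
  obtain ⟨hcard, hlines, hsum⟩ := hT
  refine ⟨by rw [Finset.card_map, hcard], ?_, ?_⟩
  · rintro _ hgL
    obtain ⟨L, hL, rfl⟩ := Finset.mem_map.1 hgL
    exact (isLine_apply_iff hg L).2 (hlines L hL)
  · rw [Finset.sum_map]
    calc ∑ L ∈ T, g L = g (∑ L ∈ T, L) := (map_sum g _ T).symm
      _ = -K := by rw [hsum, map_neg, hg.2]

/-- The permutation of the lines induced by an element of `Wset`. -/
def linePerm (hg : g ∈ Wset) : Equiv.Perm {L : Fin 7 → ℤ // IsLine L} :=
  g.toEquiv.subtypeEquiv fun L => (isLine_apply_iff hg L).symm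

/-- The action `v ↦ v ∘ g⁻¹` of an element `g` of `Wset` on functions on the lines. -/
def lineAction (hg : g ∈ Wset) : Vq →ₗ[ℚ] Vq :=
  LinearMap.funLeft ℚ ℚ (linePerm hg).symm

theorem lineAction_chi (hg : g ∈ Wset) (T : Finset (Fin 7 → ℤ)) :
    lineAction hg (chi T) = chi (T.map g.toEquiv.toEmbedding) := by
  ext M
  simp only [chi, Finset.mem_map_equiv]
  rfl

theorem isWInvariant_iff {U : Submodule ℚ Vq} :
    IsWInvariant U ↔
      ∀ (g : (Fin 7 → ℤ) ≃ₗ[ℤ] (Fin 7 → ℤ)) (hg : g ∈ Wset),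
        U ∈ Module.End.invtSubmodule (lineAction hg) := by
  refine forall₂_congr fun g hg => forall₂_congr fun v _ => ⟨fun h => h _ fun L M hLM => ?_, ?_⟩
  · have : linePerm hg L = M := Subtype.ext hLM
    rw [← this, lineAction, LinearMap.funLeft_apply, Equiv.symm_apply_apply]
  · intro h w hw
    have : w = lineAction hg v := by
      ext M
      exact hw _ M (congrArg Subtype.val ((linePerm hg).apply_symm_apply M))
    rwa [this]

theorem isWInvariant_Vtet : IsWInvariant Vtet := by
  refine isWInvariant_iff.2 fun g hg => Submodule.span_le.2 ?_
  rintro _ ⟨T, hT, rfl⟩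
  rw [SetLike.mem_coe, Submodule.mem_comap, lineAction_chi]
  exact Submodule.subset_span ⟨_, hT.map hg, rfl⟩

end WeylAction

section Reflections

/-- The form `B` as a bundled bilinear form. -/
def latticeForm : LinearMap.BilinForm ℤ (Fin 7 → ℤ) :=
  LinearMap.mk₂ ℤ B (by intros; simp only [B, Pi.add_apply]; ring)
    (by intros; simp only [B, Pi.smul_apply, smul_eq_mul]; ring)
    (by intros; simp only [B, Pi.add_apply]; ring)
    (by intros; simp only [B, Pi.smul_apply, smul_eq_mul]; ring)

theorem latticeForm_apply (x y : Fin 7 → ℤ) : latticeForm x y = B x y := rfl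

theorem B_comm (x y : Fin 7 → ℤ) : B x y = B y x := by
  simp only [B, mul_comm]

/-- The roots of the lattice `K^⊥`, which is the `E₆` lattice with the opposite sign. -/
def IsE6Root (a : Fin 7 → ℤ) : Prop := B a a = -2 ∧ B K a = 0

/-- The reflection `x ↦ x + ⟨a, x⟩ a` in a root `a`. -/
def rootReflection {a : Fin 7 → ℤ} (ha : IsE6Root a) : (Fin 7 → ℤ) ≃ₗ[ℤ] (Fin 7 → ℤ) :=
  Module.reflection (x := a) (f := -latticeForm a) <| by
    rw [LinearMap.neg_apply, latticeForm_apply, ha.1, neg_neg]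

theorem rootReflection_apply {a : Fin 7 → ℤ} (ha : IsE6Root a) (x : Fin 7 → ℤ) :
    rootReflection ha x = x + B a x • a := by
  rw [rootReflection, Module.reflection_apply, LinearMap.neg_apply, latticeForm_apply, neg_smul,
    sub_neg_eq_add]

theorem rootReflection_mem_Wset {a : Fin 7 → ℤ} (ha : IsE6Root a) : rootReflection ha ∈ Wset := by
  refine ⟨fun x y => ?_, ?_⟩
  · simp only [rootReflection_apply, ← latticeForm_apply, map_add, map_smul, LinearMap.add_apply,
      LinearMap.smul_apply, smul_eq_mul]
    simp only [latticeForm_apply, ha.1, B_comm x a]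
    ring
  · rw [rootReflection_apply, B_comm, ha.2, zero_smul, add_zero]

/-- The functional `-⟨a, ·⟩` on the quotient by `K`, for `a` orthogonal to `K`. Its coefficients
are the values `-⟨a, Eᵢ⟩ = aᵢ`. -/
def coroot (a : Fin 7 → ℤ) : Module.Dual ℚ (Fin 6 → ℚ) :=
  Fintype.linearCombination ℚ fun i : Fin 6 => (a i.succ : ℚ)

theorem coroot_projK {a : Fin 7 → ℤ} (ha : B K a = 0) (x : Fin 7 → ℤ) :
    coroot a (projK x) = -B a x := by
  have hK : -3 * (a 0 : ℚ) - ∑ i : Fin 6, (a i.succ : ℚ) = 0 := by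
    have : B K a = -3 * a 0 - ∑ i : Fin 6, 1 * a i.succ := by
      rw [B_eq_mul_sub_sum]
      congr 1
    simp only [one_mul, ha] at this
    exact_mod_cast this.symm
  simp only [coroot, Fintype.linearCombination_apply, projK_apply, smul_eq_mul, add_mul,
    Finset.sum_add_distrib, ← Finset.mul_sum, B_eq_mul_sub_sum, mul_comm (a _ : ℤ)]
  push_cast
  linear_combination -(x 0 : ℚ) / 3 * hK

theorem projK_rootReflection {a : Fin 7 → ℤ} (ha : IsE6Root a) (x : Fin 7 → ℤ) :
    projK (rootReflection ha x) = Module.preReflection (projK a) (coroot a) (projK x) := by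
  rw [rootReflection_apply, map_add, map_zsmul, Module.preReflection_apply, coroot_projK ha.2,
    neg_smul, sub_neg_eq_add, Int.cast_smul_eq_zsmul]

theorem lineProj_lineAction_rootReflection {a : Fin 7 → ℤ} (ha : IsE6Root a) (v : Vq) :
    lineProj (lineAction (rootReflection_mem_Wset ha) v) =
      Module.preReflection (projK a) (coroot a) (lineProj v) := by
  suffices lineProj ∘ₗ lineAction (rootReflection_mem_Wset ha) =
      Module.preReflection (projK a) (coroot a) ∘ₗ lineProj from LinearMap.congr_fun this v
  refine LinearMap.pi_ext' fun L => LinearMap.ext_ring ?_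
  simp only [LinearMap.comp_apply, LinearMap.single_apply, ← chi_singleton, lineAction_chi,
    Finset.map_singleton, lineProj_chi_singleton L.2]
  rw [← projK_rootReflection ha]
  exact lineProj_chi_singleton ((isLine_apply_iff (rootReflection_mem_Wset ha) _).2 L.2)

end Reflections

section CartanCriterion

open scoped Matrix

variable {ι 𝕜 M : Type*} [Field 𝕜] [AddCommGroup M] [Module 𝕜 M]
  {x : ι → M} {f : ι → Module.Dual 𝕜 M} {N : Submodule 𝕜 M}

theorem mem_of_preReflection_mem {y p : M} {φ : Module.Dual 𝕜 M} (hp : p ∈ N)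
    (hrefl : Module.preReflection y φ p ∈ N) (hne : φ p ≠ 0) : y ∈ N := by
  rw [Module.preReflection_apply, N.sub_mem_iff_right hp] at hrefl
  exact (N.smul_mem_iff hne).1 hrefl

/-- A nonzero `p ∈ N` pairs nontrivially with some `f i`, so reflecting `p` puts `x i` into `N`;
reflecting in turn along the chains of `hconn` puts every `x j` into `N`. -/
theorem eq_bot_or_eq_top_of_forall_mem_invtSubmodule_preReflection
    (hspan : Submodule.span 𝕜 (Set.range x) = ⊤) (hsep : ∀ p, (∀ i, f i p = 0) → p = 0)
    (hconn : ∀ i j, Relation.ReflTransGen (fun i j => f j (x i) ≠ 0) i j)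
    (hN : ∀ i, N ∈ Module.End.invtSubmodule (Module.preReflection (x i) (f i))) :
    N = ⊥ ∨ N = ⊤ := by
  refine or_iff_not_imp_left.2 fun hbot => ?_
  obtain ⟨p, hp, hp0⟩ := Submodule.exists_mem_ne_zero_of_ne_bot hbot
  obtain ⟨i, hi⟩ : ∃ i, f i p ≠ 0 := by
    by_contra! h
    exact hp0 (hsep p h)
  have hmem : ∀ j, x j ∈ N := fun j => by
    induction hconn i j with
    | refl => exact mem_of_preReflection_mem hp (hN i hp) hi
    | tail _ hne ih => exact mem_of_preReflection_mem ih (hN _ ih) hne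
  rw [← top_le_iff, ← hspan, Submodule.span_le]
  exact Set.range_subset_iff.2 hmem

/-- The matrix of pairings of `x` with `f`; for simple roots and coroots, the Cartan matrix. -/
def pairingMatrix (x : ι → M) (f : ι → Module.Dual 𝕜 M) : Matrix ι ι 𝕜 :=
  Matrix.of fun i j => f j (x i)

variable [Fintype ι]

theorem vecMul_pairingMatrix (c : ι → 𝕜) (j : ι) :
    (c ᵥ* pairingMatrix x f) j = f j (∑ i, c i • x i) := by
  simp [Matrix.vecMul, dotProduct, pairingMatrix]

variable [DecidableEq ι]

theorem eq_zero_of_det_pairingMatrix_ne_zero (hdet : (pairingMatrix x f).det ≠ 0) {c : ι → 𝕜}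
    (hc : ∀ j, f j (∑ i, c i • x i) = 0) : c = 0 :=
  Matrix.eq_zero_of_vecMul_eq_zero hdet <| funext fun j => (vecMul_pairingMatrix c j).trans (hc j)

theorem linearIndependent_of_det_pairingMatrix_ne_zero (hdet : (pairingMatrix x f).det ≠ 0) :
    LinearIndependent 𝕜 x :=
  Fintype.linearIndependent_iff.2 fun _ hc =>
    congrFun (eq_zero_of_det_pairingMatrix_ne_zero hdet fun j => by rw [hc, map_zero])

theorem eq_bot_or_eq_top_of_det_pairingMatrix_ne_zero [FiniteDimensional 𝕜 M]
    (hdet : (pairingMatrix x f).det ≠ 0)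
    (hcard : Fintype.card ι = Module.finrank 𝕜 M)
    (hconn : ∀ i j, Relation.ReflTransGen (fun i j => pairingMatrix x f i j ≠ 0) i j)
    (hN : ∀ i, N ∈ Module.End.invtSubmodule (Module.preReflection (x i) (f i))) :
    N = ⊥ ∨ N = ⊤ := by
  have hspan : Submodule.span 𝕜 (Set.range x) = ⊤ :=
    (linearIndependent_of_det_pairingMatrix_ne_zero hdet).span_eq_top_of_card_eq_finrank' hcard
  refine eq_bot_or_eq_top_of_forall_mem_invtSubmodule_preReflection hspan (fun p hp => ?_) hconn hN
  obtain ⟨c, rfl⟩ := (Submodule.mem_span_range_iff_exists_fun 𝕜).1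
    (hspan ▸ Submodule.mem_top : p ∈ Submodule.span 𝕜 (Set.range x))
  simp [eq_zero_of_det_pairingMatrix_ne_zero hdet hp]

end CartanCriterion

section SimpleRoots

/-- The simple roots of the `E₆` lattice, in Bourbaki's order (that of `CartanMatrix.E₆`). -/
def simpleRoot : Fin 6 → Fin 7 → ℤ :=
  ![exceptionalLine 0 - exceptionalLine 1,
    hyperplaneClass - exceptionalLine 0 - exceptionalLine 1 - exceptionalLine 2,
    exceptionalLine 1 - exceptionalLine 2,
    exceptionalLine 2 - exceptionalLine 3,
    exceptionalLine 3 - exceptionalLine 4,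
    exceptionalLine 4 - exceptionalLine 5]

theorem B_simpleRoot (i j : Fin 6) : B (simpleRoot i) (simpleRoot j) = -CartanMatrix.E₆ i j := by
  decide +revert

theorem isE6Root_simpleRoot (i : Fin 6) : IsE6Root (simpleRoot i) :=
  ⟨by rw [B_simpleRoot, CartanMatrix.E₆_diag], by decide +revert⟩

theorem pairingMatrix_simpleRoot :
    pairingMatrix (fun i => projK (simpleRoot i)) (fun i => coroot (simpleRoot i)) =
      CartanMatrix.E₆.map (Int.castRingHom ℚ) := by
  ext i j
  simp [pairingMatrix, coroot_projK (isE6Root_simpleRoot j).2, B_comm (simpleRoot j), B_simpleRoot]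

theorem reflTransGen_E₆_apply_ne_zero (i j : Fin 6) :
    Relation.ReflTransGen (fun i j => CartanMatrix.E₆ i j ≠ 0) i j := by
  -- Every node `i` of the Dynkin diagram reaches the branch node `3` by way of `towardsBranch i`.
  let towardsBranch : Fin 6 → Fin 6 := ![2, 3, 3, 3, 3, 4]
  have hto : ∀ i, CartanMatrix.E₆ i (towardsBranch i) ≠ 0 ∧
      CartanMatrix.E₆ (towardsBranch i) 3 ≠ 0 := by decide
  have hfrom : ∀ j, CartanMatrix.E₆ 3 (towardsBranch j) ≠ 0 ∧
      CartanMatrix.E₆ (towardsBranch j) j ≠ 0 := by decide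
  exact .head (hto i).1 (.head (hto i).2 (.head (hfrom j).1 (.single (hfrom j).2)))

theorem eq_bot_or_eq_top_of_forall_isE6Root {N : Submodule ℚ (Fin 6 → ℚ)}
    (hN : ∀ a, IsE6Root a →
      N ∈ Module.End.invtSubmodule (Module.preReflection (projK a) (coroot a))) :
    N = ⊥ ∨ N = ⊤ := by
  refine eq_bot_or_eq_top_of_det_pairingMatrix_ne_zero (x := fun i => projK (simpleRoot i))
    (f := fun i => coroot (simpleRoot i)) ?_ (Module.finrank_fin_fun ℚ).symm ?_
    fun i => hN _ (isE6Root_simpleRoot i)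
  · rw [pairingMatrix_simpleRoot, ← RingHom.mapMatrix_apply, ← RingHom.map_det,
      CartanMatrix.E₆_det]
    norm_num
  · simpa [pairingMatrix_simpleRoot] using reflTransGen_E₆_apply_ne_zero

end SimpleRoots

theorem map_quotientVtetEquiv_mem_invtSubmodule {Q : Submodule ℚ (Vq ⧸ Vtet)}
    (hQ : IsWInvariant (Q.comap Vtet.mkQ)) {a : Fin 7 → ℤ} (ha : IsE6Root a) :
    Q.map (quotientVtetEquiv : (Vq ⧸ Vtet) →ₗ[ℚ] (Fin 6 → ℚ)) ∈
      Module.End.invtSubmodule (Module.preReflection (projK a) (coroot a)) := by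
  rintro _ ⟨q, hq, rfl⟩
  obtain ⟨v, rfl⟩ := Vtet.mkQ_surjective q
  refine ⟨_, isWInvariant_iff.1 hQ _ (rootReflection_mem_Wset ha) hq, ?_⟩
  simp only [LinearEquiv.coe_coe, quotientVtetEquiv_mkQ, lineProj_lineAction_rootReflection]

/-- The span `T` of the 45 triangle vectors is a `W(E₆)`-invariant subspace, and the quotient
representation `𝒱/T` is 6-dimensional and irreducible: the only `W`-invariant subspaces of the
quotient (i.e. subspaces whose preimage in `𝒱` is `W`-invariant) are `0` and the whole space. -/
theorem quotient_by_triangle_span_irreducible :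
    IsWInvariant Vtet ∧
    Module.finrank ℚ (Vq ⧸ Vtet) = 6 ∧
    ∀ Q : Submodule ℚ (Vq ⧸ Vtet),
      IsWInvariant (Q.comap Vtet.mkQ) → Q = ⊥ ∨ Q = ⊤ := by
  refine ⟨isWInvariant_Vtet, ?_, fun Q hQ => ?_⟩
  · rw [quotientVtetEquiv.finrank_eq, Module.finrank_fin_fun]
  · rw [← Submodule.map_eq_bot_iff (e := quotientVtetEquiv),
      ← Submodule.map_eq_top_iff (e := quotientVtetEquiv)]
    exact eq_bot_or_eq_top_of_forall_isE6Root fun a ha =>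
      map_quotientVtetEquiv_mem_invtSubmodule hQ ha
end

section
/- The orthogonal complement K^⊥ = {v ∈ (Fin 7 → ℤ) : ⟨v, K⟩ = 0} is a free ℤ-module of rank 6 on which the bilinear form is even, i.e. ⟨v, v⟩ is an even integer for every v ∈ K^⊥, and negative definite, i.e. ⟨v, v⟩ < 0 for every nonzero v ∈ K^⊥. -/
/-- The orthogonal complement of `K`, as a ℤ-submodule of the lattice. -/
def Kperp : Submodule ℤ (Fin 7 → ℤ) where
  carrier := {v | B v K = 0}
  zero_mem' := by simp [B]
  add_mem' := by
    intro a b ha hb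
    simp only [Set.mem_setOf_eq, B, Pi.add_apply] at *
    linear_combination ha + hb
  smul_mem' := by
    intro c v hv
    simp only [Set.mem_setOf_eq, B, Pi.smul_apply, smul_eq_mul] at *
    linear_combination c * hv

section Rank

open Module

variable {R M : Type*} [CommRing R] [IsDomain R] [AddCommGroup M] [Module R M]
  [Module.Finite R M]

theorem finrank_range_dual_eq_one {f : Dual R M} (hf : f ≠ 0) :
    finrank R (LinearMap.range f) = 1 := by
  refine le_antisymm ?_ (Submodule.one_le_finrank_iff.2 ?_)
  · simpa using Submodule.finrank_le (LinearMap.range f)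
  · rwa [ne_eq, LinearMap.range_eq_bot]

theorem finrank_ker_dual_add_one {f : Dual R M} (hf : f ≠ 0) :
    finrank R (LinearMap.ker f) + 1 = finrank R M := by
  rw [← finrank_range_dual_eq_one hf, ← f.quotKerEquivRange.finrank_eq, add_comm,
    Submodule.finrank_quotient_add_finrank]

end Rank

theorem even_toBilin'_diagonal_self_iff {ι : Type*} [Fintype ι] [DecidableEq ι] (w : ι → ℤ)
    {k : ι → ℤ} (hk : ∀ i, Odd (k i)) (v : ι → ℤ) :
    Even ((Matrix.diagonal w).toBilin' v v) ↔ Even ((Matrix.diagonal w).toBilin' k v) := by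
  rw [← Int.even_sub]
  simp only [Matrix.toBilin'_apply', Matrix.mulVec_diagonal, dotProduct,
    ← Finset.sum_sub_distrib, ← sub_mul]
  refine Finset.even_sum _ fun i _ ↦ ?_
  have hki : ¬Even (k i) := Int.not_even_iff_odd.2 (hk i)
  simp only [Int.even_mul, Int.even_sub]
  tauto

section LorentzForm

variable {R : Type*} [CommRing R] {n : ℕ}

/-- The standard Lorentzian form of signature `(1, n)` on `R ^ (n + 1)`: coordinate `0` is the
positive direction. For `R = ℤ` it is the odd unimodular lattice `I_{1,n}`. -/
def lorentzForm (R : Type*) [CommRing R] (n : ℕ) : LinearMap.BilinForm R (Fin (n + 1) → R) :=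
  (Matrix.diagonal (Fin.cons 1 fun _ ↦ -1)).toBilin'

theorem lorentzForm_apply (x y : Fin (n + 1) → R) :
    lorentzForm R n x y = x 0 * y 0 - ∑ i : Fin n, x i.succ * y i.succ := by
  simp [lorentzForm, Matrix.toBilin'_apply', Matrix.mulVec_diagonal, dotProduct,
    Fin.sum_univ_succ, sub_eq_add_neg]

theorem lorentzForm_self_neg_of_orthogonal [LinearOrder R] [IsStrictOrderedRing R]
    {k v : Fin (n + 1) → R} (hk : 0 < lorentzForm R n k k) (hkv : lorentzForm R n k v = 0)
    (hv : v ≠ 0) : lorentzForm R n v v < 0 := by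
  contrapose! hv
  simp only [lorentzForm_apply, ← sq, sub_pos, sub_nonneg, sub_eq_zero] at hk hkv hv
  have v_zero : v 0 = 0 := by
    by_contra hv₀
    have : (k 0 * v 0) ^ 2 < (k 0 * v 0) ^ 2 := calc
      (k 0 * v 0) ^ 2 = (∑ i : Fin n, k i.succ * v i.succ) ^ 2 := by rw [hkv]
      _ ≤ (∑ i : Fin n, k i.succ ^ 2) * ∑ i : Fin n, v i.succ ^ 2 :=
        Finset.sum_mul_sq_le_sq_mul_sq ..
      _ ≤ (∑ i : Fin n, k i.succ ^ 2) * v 0 ^ 2 := by gcongr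
      _ < k 0 ^ 2 * v 0 ^ 2 := by gcongr
      _ = (k 0 * v 0) ^ 2 := by ring
    exact this.false
  have sum_sq_eq_zero : ∑ i : Fin n, v i.succ ^ 2 = 0 :=
    le_antisymm (by simpa [v_zero] using hv) (Finset.sum_nonneg fun i _ ↦ sq_nonneg _)
  have v_succ (i : Fin n) : v i.succ = 0 :=
    sq_eq_zero_iff.1 <|
      (Finset.sum_eq_zero_iff_of_nonneg fun _ _ ↦ sq_nonneg _).1 sum_sq_eq_zero i
        (Finset.mem_univ i)
  exact funext (Fin.cases v_zero v_succ)

end LorentzForm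

theorem Kperp_is_E6_general {n : ℕ} {k : Fin (n + 1) → ℤ} (hodd : ∀ i, Odd (k i))
    (hpos : 0 < lorentzForm ℤ n k k) :
    Module.Free ℤ (LinearMap.ker (lorentzForm ℤ n k)) ∧
    Module.finrank ℤ (LinearMap.ker (lorentzForm ℤ n k)) = n ∧
    (∀ v ∈ LinearMap.ker (lorentzForm ℤ n k), Even (lorentzForm ℤ n v v)) ∧
    (∀ v ∈ LinearMap.ker (lorentzForm ℤ n k), v ≠ 0 → lorentzForm ℤ n v v < 0) := by
  refine ⟨inferInstance, ?_, fun v hv ↦ ?_, fun v hv ↦ lorentzForm_self_neg_of_orthogonal hpos hv⟩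
  · have functional_ne_zero : lorentzForm ℤ n k ≠ 0 := fun h ↦ by simp [h] at hpos
    simpa using finrank_ker_dual_add_one functional_ne_zero
  · have self_iff : Even (lorentzForm ℤ n v v) ↔ Even (lorentzForm ℤ n k v) :=
      even_toBilin'_diagonal_self_iff _ hodd v
    rw [self_iff, LinearMap.mem_ker.1 hv]
    exact Even.zero

theorem B_eq_lorentzForm (x y : Fin 7 → ℤ) : B x y = lorentzForm ℤ 6 x y := by
  simp only [B, lorentzForm_apply, Fin.sum_univ_six, Fin.reduceSucc]
  ring

theorem Kperp_eq_ker_lorentzForm : Kperp = LinearMap.ker (lorentzForm ℤ 6 K) := by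
  ext v
  change B v K = 0 ↔ lorentzForm ℤ 6 K v = 0
  rw [← B_eq_lorentzForm, B, B]
  simp only [mul_comm]

/-- `K^⊥` is a free ℤ-module of rank 6 on which the form is even and negative definite
(it is the `E₆` lattice, up to sign). -/
theorem Kperp_is_E6 :
    Module.Free ℤ ↥Kperp ∧ Module.finrank ℤ ↥Kperp = 6 ∧
    (∀ v ∈ Kperp, Even (B v v)) ∧
    (∀ v ∈ Kperp, v ≠ 0 → B v v < 0) := by
  rw [Kperp_eq_ker_lorentzForm]
  simp only [B_eq_lorentzForm]
  exact Kperp_is_E6_general (k := K) (by decide) (by rw [← B_eq_lorentzForm]; decide)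
end
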